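/- Let P be a convex hyperbolic n-polyhedron (n ≥ 2), viewed in the Klein model as a convex subset of the open unit ball of ℝⁿ, and let μ be the hyperbolic volume measure on the open unit ball, i.e. the measure with density (1 − |x|²)^{−(n+1)/2} with respect to Lebesgue measure. Then μ(P) < ∞ if and only if the closure of P in ℝⁿ is the convex hull of a finite set of points of the closed unit ball (equivalently, the convex hull of its vertices). -/

import Mathlib

open scoped BigOperators

noncomputable section

/-- The Minkowski bilinear form `⟨x,y⟩ = -x₀y₀ + x₁y₁ + ⋯ + xₙyₙ` on `ℝ^{n+1}`. -/
def mink {n : ℕ} (x y : Fin (n + 1) → ℝ) : ℝ :=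
  -(x 0 * y 0) + ∑ i : Fin n, x i.succ * y i.succ

/-- The hyperboloid model of the hyperbolic space `ℍⁿ`. -/
def Hyperboloid (n : ℕ) : Set (Fin (n + 1) → ℝ) :=
  {x | mink x x = -1 ∧ 0 < x 0}

/-- The Klein projection `x ↦ (x₁/x₀, …, xₙ/x₀)` of the hyperboloid onto the unit ball. -/
def kleinMap {n : ℕ} (x : Fin (n + 1) → ℝ) : EuclideanSpace ℝ (Fin n) :=
  WithLp.toLp 2 fun i => x i.succ / x 0

/-- Dimension of a subset of a real vector space: the rank of its vector span. -/
def sdim {n : ℕ} (s : Set (EuclideanSpace ℝ (Fin n))) : ℕ :=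
  Module.finrank ℝ (vectorSpan ℝ s)

/-- A convex hyperbolic `n`-polyhedron: a finite intersection of hyperbolic half-spaces
`H_{eᵢ}⁻ = {x : ⟨eᵢ,x⟩ ≤ 0}` (with `⟨eᵢ,eᵢ⟩ = 1`) having nonempty interior
(equivalently, its Klein-model image has nonempty interior in `ℝⁿ`). -/
structure HypPolyhedron (n : ℕ) where
  m : ℕ
  e : Fin m → (Fin (n + 1) → ℝ)
  unit : ∀ i, mink (e i) (e i) = 1
  nonempty_int :
    (interior (kleinMap '' {x ∈ Hyperboloid n | ∀ i, mink (e i) x ≤ 0})).Nonempty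

namespace HypPolyhedron

variable {n : ℕ} (P : HypPolyhedron n)

/-- The set of points of the polyhedron in the hyperboloid model. -/
def carrier : Set (Fin (n + 1) → ℝ) :=
  {x ∈ Hyperboloid n | ∀ i, mink (P.e i) x ≤ 0}

/-- `P̄`: the closure of the Klein-model image of the polyhedron in the closed unit ball. -/
def cl : Set (EuclideanSpace ℝ (Fin n)) :=
  closure (kleinMap '' P.carrier)

/-- The `k`-faces of `P`: the `k`-dimensional (nonempty) exposed faces of `P̄`. -/
def faces (k : ℕ) : Set (Set (EuclideanSpace ℝ (Fin n))) :=
  {F | IsExposed ℝ P.cl F ∧ F.Nonempty ∧ sdim F = k}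

/-- `a_k(P)`: the number of `k`-faces of `P`. -/
def a (k : ℕ) : ℕ := (P.faces k).ncard

/-- Vertices of `P`: the points of `0`-dimensional exposed faces of `P̄`. -/
def verts : Set (EuclideanSpace ℝ (Fin n)) :=
  {v | IsExposed ℝ P.cl {v}}

/-- Ideal vertices: vertices lying on the unit sphere. -/
def idealVerts : Set (EuclideanSpace ℝ (Fin n)) :=
  {v ∈ P.verts | ‖v‖ = 1}

/-- Finite vertices: vertices lying in the open unit ball. -/
def finiteVerts : Set (EuclideanSpace ℝ (Fin n)) :=
  {v ∈ P.verts | ‖v‖ < 1}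

/-- `v_∞(P)`: the number of ideal vertices of `P`. -/
def vInf : ℕ := P.idealVerts.ncard

/-- The bounding hyperplane `H_e` contains the face `F`. -/
def faceInHyperplane (e : Fin (n + 1) → ℝ) (F : Set (EuclideanSpace ℝ (Fin n))) : Prop :=
  ∀ x ∈ P.carrier, kleinMap x ∈ F → mink e x = 0

/-- `P` is right-angled: whenever two distinct bounding hyperplanes both contain an
`(n-2)`-dimensional face of `P`, the corresponding unit normals are orthogonal,
i.e. the dihedral angle is `π/2`. -/
def IsRightAngled : Prop :=
  ∀ i j : Fin P.m, i ≠ j →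
    (∃ F ∈ P.faces (n - 2), P.faceInHyperplane (P.e i) F ∧ P.faceInHyperplane (P.e j) F) →
    mink (P.e i) (P.e j) = 0

/-- `P` has finite volume: `P̄` is the convex hull of its (finitely many) vertices. -/
def FiniteVolume : Prop :=
  P.verts.Finite ∧ P.cl = convexHull ℝ P.verts

/-- `P` is compact: finite volume and all vertices are finite. -/
def IsCompactPoly : Prop :=
  P.FiniteVolume ∧ ∀ v ∈ P.verts, ‖v‖ < 1

/-- `P` is ideal: finite volume and all vertices are ideal. -/
def IsIdeal : Prop :=
  P.FiniteVolume ∧ ∀ v ∈ P.verts, ‖v‖ = 1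

end HypPolyhedron

/-- `ν(P) = a_{n-1}(P) + v_∞(P)` ranging over the family `𝒫ⁿ` of finite-volume non-compact
right-angled convex hyperbolic `n`-polyhedra. -/
def nuSet (n : ℕ) : Set ℕ :=
  {m | ∃ P : HypPolyhedron n,
        P.FiniteVolume ∧ P.IsRightAngled ∧ ¬ P.IsCompactPoly ∧ P.a (n - 1) + P.vInf = m}

/-- `νₙ = sInf {ν(P) : P ∈ 𝒫ⁿ}` (with `sInf ∅ = 0`). -/
def nu (n : ℕ) : ℕ := sInf (nuSet n)

/-- The hyperbolic volume measure on the Klein ball: density `(1 - |x|²)^{-(n+1)/2}`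
with respect to Lebesgue measure. -/
def hypVolume (n : ℕ) : MeasureTheory.Measure (EuclideanSpace ℝ (Fin n)) :=
  MeasureTheory.volume.withDensity
    (fun x => ENNReal.ofReal ((1 - ‖x‖ ^ 2) ^ (-((n : ℝ) + 1) / 2)))

/-!
In the Klein model `P` is `K ∩ B`, where `K` is a Euclidean polyhedral set and `B` is the open unit
ball. The density `(1 - ‖x‖²) ^ (-(n + 1) / 2)` is not integrable near any point of the unit sphere:
in polar coordinates its radial part is at least a multiple of `(1 - r)⁻¹`. So if `P` has finite
volume then the interior of `K` misses the sphere, whence `K` lies in the closed ball by convexity.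
Then `K` is compact, it is the closure of `P`, and it is the convex hull of its extreme points, each
of which is determined by the set of inequalities that are tight at it.

Conversely, on the convex hull of a finite subset `s` of the closed ball, `1 - ‖x‖²` is at least a
multiple of the distance from `x` to some `v ∈ s`. Hence the density is at most a multiple of
`∑ v ∈ s, ‖x - v‖ ^ (-(n + 1) / 2)`, which is locally integrable because `(n + 1) / 2 < n`.
-/

open MeasureTheory Metric Module
open scoped ENNReal Pointwise RealInnerProductSpace Topology

section Polyhedron

variable {ι E : Type*} [AddCommGroup E] [Module ℝ E] (f : ι → E →ₗ[ℝ] ℝ) (b : ι → ℝ)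

/-- The polyhedral set cut out by the linear inequalities `f i x ≤ b i`. -/
def polyhedron : Set E :=
  {x | ∀ i, f i x ≤ b i}

lemma convex_polyhedron : Convex ℝ (polyhedron f b) := by
  simp only [polyhedron, Set.ofPred_forall]
  exact convex_iInter fun i => convex_halfSpace_le (f i).isLinear _

lemma isClosed_polyhedron [TopologicalSpace E] [T2Space E] [IsTopologicalAddGroup E]
    [ContinuousSMul ℝ E] [FiniteDimensional ℝ E] : IsClosed (polyhedron f b) := by
  simp only [polyhedron, Set.ofPred_forall]
  exact isClosed_iInter fun i =>
    isClosed_le (f i).continuous_of_finiteDimensional continuous_const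

variable {f b}

lemma exists_pos_add_smul_mem_polyhedron [Finite ι] {x v : E} (hx : x ∈ polyhedron f b)
    (hv : ∀ i, f i x = b i → f i v ≤ 0) : ∃ t > (0 : ℝ), x + t • v ∈ polyhedron f b := by
  have hfeasible : ∀ i, ∀ᶠ t : ℝ in 𝓝[>] 0, f i (x + t • v) ≤ b i := by
    intro i
    simp only [map_add, map_smul, smul_eq_mul]
    rcases (hx i).lt_or_eq with hlt | heq
    · have hcont : ContinuousAt (fun t : ℝ => f i x + t * f i v) 0 := by fun_prop
      exact nhdsWithin_le_nhds
        ((hcont.eventually_lt_const (by simpa using hlt)).mono fun t ht => ht.le)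
    · filter_upwards [self_mem_nhdsWithin] with t ht
      rw [heq]
      exact add_le_of_nonpos_right (mul_nonpos_of_nonneg_of_nonpos (Set.mem_Ioi.1 ht).le (hv i heq))
  obtain ⟨t, ht, ht0⟩ := ((Filter.eventually_all.2 hfeasible).and self_mem_nhdsWithin).exists
  exact ⟨t, ht0, ht⟩

variable (f b)

lemma injOn_active_extremePoints_polyhedron [Finite ι] :
    Set.InjOn (fun x => {i | f i x = b i}) (Set.extremePoints ℝ (polyhedron f b)) := by
  intro x hx y hy hxy
  have hactive : ∀ i, f i x = b i → f i y = b i := fun i => (Set.ext_iff.1 hxy i).1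
  obtain ⟨t, ht, hmem⟩ := exists_pos_add_smul_mem_polyhedron (v := x - y) hx.1 fun i hi => by
    rw [map_sub, hi, hactive i hi, sub_self]
  have hopen : x ∈ openSegment ℝ (x + t • (x - y)) y := by
    refine ⟨1 / (1 + t), t / (1 + t), by positivity, by positivity, by field_simp, ?_⟩
    match_scalars <;> field_simp
    ring
  exact ((mem_extremePoints.1 hx).2 _ hmem y hy.1 hopen).2.symm

lemma finite_extremePoints_polyhedron [Finite ι] :
    (Set.extremePoints ℝ (polyhedron f b)).Finite :=
  Set.Finite.of_finite_image (Set.toFinite _) (injOn_active_extremePoints_polyhedron f b)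

variable {f b}

lemma exists_finset_convexHull_eq_polyhedron [TopologicalSpace E] [T2Space E]
    [IsTopologicalAddGroup E] [ContinuousSMul ℝ E] [LocallyConvexSpace ℝ E] [Finite ι]
    (hcompact : IsCompact (polyhedron f b)) :
    ∃ s : Finset E, convexHull ℝ (s : Set E) = polyhedron f b := by
  have hfin := finite_extremePoints_polyhedron f b
  refine ⟨hfin.toFinset, ?_⟩
  rw [hfin.coe_toFinset, ← (hfin.isClosed_convexHull ℝ).closure_eq,
    closure_convexHull_extremePoints hcompact (convex_polyhedron f b)]

end Polyhedron

section ConvexBody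

variable {E : Type*} [NormedAddCommGroup E] [NormedSpace ℝ E] {K : Set E} {r : ℝ}

lemma exists_mem_interior_norm_eq (hK : Convex ℝ K) {x y : E} (hx : x ∈ interior K)
    (hxr : ‖x‖ < r) (hy : y ∈ K) (hyr : r < ‖y‖) : ∃ z ∈ interior K, ‖z‖ = r := by
  have hcont : ContinuousOn (fun t : ℝ => ‖AffineMap.lineMap x y t‖) (Set.Icc 0 1) :=
    (AffineMap.lineMap_continuous.norm).continuousOn
  obtain ⟨t, ht, htr⟩ := intermediate_value_Ioo zero_le_one hcont
    (show r ∈ Set.Ioo _ _ by simpa using ⟨hxr, hyr⟩)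
  refine ⟨AffineMap.lineMap x y t, hK.openSegment_interior_self_subset_interior hx hy ?_, htr⟩
  rw [openSegment_eq_image_lineMap]
  exact Set.mem_image_of_mem _ ht

lemma closure_inter_ball_eq_self (hK : Convex ℝ K) (hclosed : IsClosed K)
    (hne : (interior K).Nonempty) (hr : r ≠ 0) (hKr : K ⊆ closedBall 0 r) :
    closure (K ∩ ball 0 r) = K := by
  refine (closure_minimal Set.inter_subset_left hclosed).antisymm ?_
  calc K = closure (interior K) := by
        rw [hK.closure_interior_eq_closure_of_nonempty_interior hne, hclosed.closure_eq]
    _ ⊆ closure (K ∩ ball 0 r) := by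
        rw [← interior_closedBall (0 : E) hr]
        exact closure_mono (Set.subset_inter interior_subset (interior_mono hKr))

end ConvexBody

section DistanceComparison

lemma exists_pos_forall_le_dist {X : Type*} [MetricSpace X] {s : Set X} (hs : s.Finite) :
    ∃ δ > 0, ∀ v ∈ s, ∀ w ∈ s, v ≠ w → δ ≤ dist v w := by
  rcases s.subsingleton_or_nontrivial with hsub | hnontriv
  · exact ⟨1, one_pos, fun v hv w hw hvw => absurd (hsub hv hw) hvw⟩
  · exact ⟨s.infsep, hs.infsep_pos_iff_nontrivial.2 hnontriv, fun v hv w hw hvw =>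
      Set.infsep_le_dist_of_mem hv hw hvw⟩

variable {E : Type*} [NormedAddCommGroup E] [InnerProductSpace ℝ E]

lemma sum_mul_dist_sq_eq_sub {ι : Type*} {s : Finset ι} {t : ι → ℝ} {w : ι → E} {x : E}
    (ht : ∑ i ∈ s, t i = 1) (hx : ∑ i ∈ s, t i • w i = x) :
    ∑ i ∈ s, t i * dist (w i) x ^ 2 = ∑ i ∈ s, t i * ‖w i‖ ^ 2 - ‖x‖ ^ 2 := by
  have hinner : ∑ i ∈ s, t i * ⟪w i, x⟫ = ‖x‖ ^ 2 := by
    simp only [← real_inner_smul_left, ← sum_inner, hx, real_inner_self_eq_norm_sq]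
  calc ∑ i ∈ s, t i * dist (w i) x ^ 2
      = ∑ i ∈ s, (t i * ‖w i‖ ^ 2 - 2 * (t i * ⟪w i, x⟫) + t i * ‖x‖ ^ 2) := by
        refine Finset.sum_congr rfl fun i _ => ?_
        rw [dist_eq_norm, norm_sub_sq_real]
        ring
    _ = ∑ i ∈ s, t i * ‖w i‖ ^ 2 - ‖x‖ ^ 2 := by
        rw [Finset.sum_add_distrib, Finset.sum_sub_distrib, ← Finset.mul_sum, hinner,
          ← Finset.sum_mul, ht]
        ring

/-- Averaging over the vertices: `r² - ‖x‖²` is at least the variance of the barycentric weights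
of `x`, while the distance from `x` to its nearest vertex is at most their first absolute moment
about that vertex. As distinct vertices are `δ` apart, the variance is at least `δ / 4` times this
moment. -/
lemma exists_mul_dist_le_sq_sub_norm_sq {s : Finset E} {r : ℝ}
    (hs : (s : Set E) ⊆ closedBall 0 r) :
    ∃ c > 0, ∀ x ∈ convexHull ℝ (s : Set E), ∃ v ∈ s, c * dist x v ≤ r ^ 2 - ‖x‖ ^ 2 := by
  obtain ⟨δ, hδ, hsep⟩ := exists_pos_forall_le_dist s.finite_toSet
  refine ⟨δ / 4, by positivity, fun x hx => ?_⟩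
  obtain ⟨t, ht0, ht1, htx⟩ := Finset.mem_convexHull'.1 hx
  have hne : s.Nonempty := Finset.coe_nonempty.1 (convexHull_nonempty_iff.1 ⟨x, hx⟩)
  obtain ⟨v, hv, hnearest⟩ := s.exists_min_image (fun w => dist w x) hne
  have hdist : ∀ w ∈ s, δ / 4 * dist w v ≤ dist w x ^ 2 := by
    intro w hw
    have htwice : dist w v ≤ 2 * dist w x := by
      linarith [dist_triangle_right w v x, hnearest w hw]
    rcases eq_or_ne w v with rfl | hwv
    · simp
    · nlinarith [hsep w hw v hv hwv]
  have hnorm : ∀ w ∈ s, ‖w‖ ≤ r := fun w hw => by simpa using hs hw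
  refine ⟨v, hv, ?_⟩
  calc δ / 4 * dist x v
      ≤ δ / 4 * ∑ w ∈ s, t w * dist w v := by
        gcongr
        simpa only [htx, smul_eq_mul] using
          (convexOn_dist v convex_univ).map_sum_le ht0 ht1 fun w _ => Set.mem_univ w
    _ = ∑ w ∈ s, t w * (δ / 4 * dist w v) := by
        simp only [Finset.mul_sum, mul_left_comm]
    _ ≤ ∑ w ∈ s, t w * dist w x ^ 2 :=
        Finset.sum_le_sum fun w hw => mul_le_mul_of_nonneg_left (hdist w hw) (ht0 w hw)
    _ = ∑ w ∈ s, t w * ‖w‖ ^ 2 - ‖x‖ ^ 2 := sum_mul_dist_sq_eq_sub ht1 htx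
    _ ≤ ∑ w ∈ s, t w * r ^ 2 - ‖x‖ ^ 2 := by
        gcongr with w hw
        exacts [ht0 w hw, hnorm w hw]
    _ = r ^ 2 - ‖x‖ ^ 2 := by rw [← Finset.sum_mul, ht1, one_mul]

end DistanceComparison

section Convergence

variable {E : Type*} [NormedAddCommGroup E] [MeasurableSpace E] [BorelSpace E] {p : ℝ}

lemma locallyIntegrable_norm_sub_rpow [NormedSpace ℝ E] [FiniteDimensional ℝ E] [Nontrivial E]
    (μ : Measure E) [μ.IsAddHaarMeasure] (hp : -finrank ℝ E < p) (v : E) :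
    LocallyIntegrable (fun x => ‖x - v‖ ^ p) μ := by
  have hcentred : LocallyIntegrable (fun x : E => ‖x‖ ^ p) μ :=
    locallyIntegrable_of_norm_le_rpow (C := 1) finrank_pos (neg_lt.1 hp)
      (.of_forall fun x => by simp [Real.abs_rpow_of_nonneg])
      (measurable_norm.pow_const p).aestronglyMeasurable
  refine locallyIntegrable_iff.2 fun K hK => ?_
  exact ((measurePreserving_sub_right μ v).integrableOn_image
    (MeasurableEquiv.subRight v).measurableEmbedding).1
    (hcentred.integrableOn_isCompact (hK.image (by fun_prop)))

lemma setLIntegral_convexHull_sq_sub_norm_sq_rpow_lt_top [InnerProductSpace ℝ E]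
    [FiniteDimensional ℝ E] (μ : Measure E) [μ.IsAddHaarMeasure] {s : Finset E} {r : ℝ}
    (hs : (s : Set E) ⊆ closedBall 0 r) (hp : -finrank ℝ E < p) (hp0 : p ≤ 0) :
    ∫⁻ x in convexHull ℝ (s : Set E), ENNReal.ofReal ((r ^ 2 - ‖x‖ ^ 2) ^ p) ∂μ < ⊤ := by
  have : Nontrivial E :=
    nontrivial_of_finrank_pos (R := ℝ) (by exact_mod_cast neg_lt_zero.1 (hp.trans_le hp0))
  obtain ⟨c, hc, hcomparison⟩ := exists_mul_dist_le_sq_sub_norm_sq hs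
  have hmeas : MeasurableSet (convexHull ℝ (s : Set E)) :=
    (s.finite_toSet.isClosed_convexHull ℝ).measurableSet
  have hnotMem : ∀ᵐ x ∂μ, x ∉ (s : Set E) :=
    measure_eq_zero_iff_ae_notMem.1 (s.finite_toSet.measure_zero μ)
  have hbound : ∀ x ∈ convexHull ℝ (s : Set E), x ∉ (s : Set E) →
      ENNReal.ofReal ((r ^ 2 - ‖x‖ ^ 2) ^ p) ≤
        ∑ v ∈ s, ENNReal.ofReal (c ^ p * ‖x - v‖ ^ p) := by
    intro x hx hxs
    obtain ⟨v, hv, hxv⟩ := hcomparison x hx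
    rw [dist_eq_norm] at hxv
    have hpos : 0 < ‖x - v‖ := norm_sub_pos_iff.2 (ne_of_mem_of_not_mem hv hxs).symm
    calc ENNReal.ofReal ((r ^ 2 - ‖x‖ ^ 2) ^ p) ≤ ENNReal.ofReal (c ^ p * ‖x - v‖ ^ p) := by
          rw [← Real.mul_rpow hc.le hpos.le]
          exact ENNReal.ofReal_le_ofReal
            (Real.rpow_le_rpow_of_nonpos (by positivity) hxv hp0)
      _ ≤ _ := Finset.single_le_sum_of_canonicallyOrdered
          (f := fun v => ENNReal.ofReal (c ^ p * ‖x - v‖ ^ p)) hv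
  calc ∫⁻ x in convexHull ℝ (s : Set E), ENNReal.ofReal ((r ^ 2 - ‖x‖ ^ 2) ^ p) ∂μ
      ≤ ∫⁻ x in convexHull ℝ (s : Set E), ∑ v ∈ s, ENNReal.ofReal (c ^ p * ‖x - v‖ ^ p) ∂μ :=
        setLIntegral_mono_ae' hmeas (hnotMem.mono fun x hxs hx => hbound x hx hxs)
    _ = ∑ v ∈ s, ∫⁻ x in convexHull ℝ (s : Set E), ENNReal.ofReal (c ^ p * ‖x - v‖ ^ p) ∂μ :=
        lintegral_finsetSum _ fun v _ => by fun_prop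
    _ < ⊤ := ENNReal.sum_lt_top.2 fun v _ =>
        (((locallyIntegrable_norm_sub_rpow μ hp v).integrableOn_isCompact
          (s.finite_toSet.isCompact_convexHull ℝ)).const_mul (c ^ p)).lintegral_lt_top

end Convergence

section PolarCoordinates

lemma setLIntegral_volumeIoiPow (d : ℕ) {S : Set (Set.Ioi (0 : ℝ))} (hS : MeasurableSet S)
    {g : ℝ → ℝ≥0∞} (hg : Measurable g) :
    ∫⁻ r in S, g r ∂(Measure.volumeIoiPow d) =
      ∫⁻ r in ((↑) '' S : Set ℝ), ENNReal.ofReal (r ^ d) * g r := by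
  rw [Measure.volumeIoiPow, setLIntegral_withDensity_eq_setLIntegral_mul _ (by fun_prop)
    (by fun_prop) hS]
  exact setLIntegral_subtype measurableSet_Ioi S fun r => ENNReal.ofReal (r ^ d) * g r

variable {E : Type*} [NormedAddCommGroup E] [NormedSpace ℝ E]

lemma smul_sphere_eq_image_homeomorphUnitSphereProd_preimage
    (S : Set (Set.Ioi (0 : ℝ))) (U : Set (sphere (0 : E) 1)) :
    ((↑) '' S : Set ℝ) • ((↑) '' U : Set E) =
      (↑) '' (homeomorphUnitSphereProd E ⁻¹' (U ×ˢ S)) := by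
  rw [← Set.image2_smul, Set.image2_image_right, ← Homeomorph.image_symm, Set.image_image,
    Set.image2_image_left, Set.image2_swap, ← Set.image_prod]
  rfl

variable [FiniteDimensional ℝ E] [MeasurableSpace E] [BorelSpace E] (μ : Measure E)
  [μ.IsAddHaarMeasure]

lemma setLIntegral_smul_sphere_comp_norm {S : Set ℝ} (hS : MeasurableSet S)
    (hS0 : S ⊆ Set.Ioi 0) (U : Set (sphere (0 : E) 1)) {g : ℝ → ℝ≥0∞} (hg : Measurable g) :
    ∫⁻ x in S • ((↑) '' U : Set E), g ‖x‖ ∂μ =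
      μ.toSphere U * ∫⁻ r in S, ENNReal.ofReal (r ^ (finrank ℝ E - 1)) * g r := by
  obtain ⟨S, rfl⟩ : ∃ S' : Set (Set.Ioi (0 : ℝ)), (↑) '' S' = S :=
    ⟨(↑) ⁻¹' S, by rwa [Subtype.image_preimage_coe, Set.inter_eq_right]⟩
  have hS' : MeasurableSet S :=
    ((MeasurableEmbedding.subtype_coe measurableSet_Ioi).measurableSet_image).1 hS
  have hg' : Measurable fun r : Set.Ioi (0 : ℝ) => g r := by fun_prop
  calc ∫⁻ x in ((↑) '' S : Set ℝ) • ((↑) '' U : Set E), g ‖x‖ ∂μ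
      = ∫⁻ x in homeomorphUnitSphereProd E ⁻¹' (U ×ˢ S), g ‖x.1‖ ∂(μ.comap (↑)) := by
        rw [smul_sphere_eq_image_homeomorphUnitSphereProd_preimage]
        exact (setLIntegral_subtype (measurableSet_singleton _).compl _ fun x => g ‖x‖).symm
    _ = ∫⁻ y in U ×ˢ S, g y.2 ∂(μ.toSphere.prod (.volumeIoiPow (finrank ℝ E - 1))) := by
        simpa only [homeomorphUnitSphereProd_apply_snd_coe] using
          μ.measurePreserving_homeomorphUnitSphereProd.setLIntegral_comp_preimage_emb
            (Homeomorph.measurableEmbedding _) (fun y => g y.2) (U ×ˢ S)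
    _ = μ.toSphere U * ∫⁻ r in S, g r ∂(Measure.volumeIoiPow (finrank ℝ E - 1)) := by
        rw [← Measure.prod_restrict, ← lintegral_map hg' measurable_snd, Measure.map_snd_prod,
          lintegral_smul_measure, Measure.restrict_apply_univ, smul_eq_mul]
    _ = _ := by rw [setLIntegral_volumeIoiPow _ hS' hg]

end PolarCoordinates

section Divergence

lemma setLIntegral_Ioo_inv_one_sub_eq_top {a : ℝ} (ha : a < 1) :
    ∫⁻ r in Set.Ioo a 1, ENNReal.ofReal (1 - r)⁻¹ = ⊤ := by
  have hnotIntegrable : ¬ IntegrableOn (fun r : ℝ => (r - 1)⁻¹) (Set.Ioo a 1) := by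
    rw [← intervalIntegrable_iff_integrableOn_Ioo_of_le ha.le, intervalIntegrable_sub_inv_iff]
    simp [ha.ne, ha.le]
  contrapose! hnotIntegrable
  have hpos : 0 ≤ᵐ[volume.restrict (Set.Ioo a 1)] fun r : ℝ => (1 - r)⁻¹ :=
    ae_restrict_of_forall_mem measurableSet_Ioo fun r hr => inv_nonneg.2 (sub_nonneg.2 hr.2.le)
  have hintegrable : IntegrableOn (fun r : ℝ => (1 - r)⁻¹) (Set.Ioo a 1) :=
    (lintegral_ofReal_ne_top_iff_integrable (by fun_prop) hpos).1 hnotIntegrable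
  simpa only [Pi.neg_def, neg_inv, neg_sub] using! hintegrable.neg

lemma inv_two_mul_one_sub_le_one_sub_sq_rpow {p r : ℝ} (hp : p ≤ -1) (hr0 : 0 ≤ r) (hr1 : r < 1) :
    (2 * (1 - r))⁻¹ ≤ (1 - r ^ 2) ^ p := by
  have hpos : 0 < 1 - r ^ 2 := by nlinarith
  calc (2 * (1 - r))⁻¹ ≤ (1 - r ^ 2)⁻¹ := by
        gcongr
        nlinarith
    _ = (1 - r ^ 2) ^ (-1 : ℝ) := (Real.rpow_neg_one _).symm
    _ ≤ (1 - r ^ 2) ^ p := Real.rpow_le_rpow_of_exponent_ge hpos (by nlinarith) hp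

lemma setLIntegral_Ioo_pow_mul_one_sub_sq_rpow_eq_top (d : ℕ) {a p : ℝ} (hp : p ≤ -1)
    (ha0 : 0 < a) (ha1 : a < 1) :
    ∫⁻ r in Set.Ioo a 1, ENNReal.ofReal (r ^ d) * ENNReal.ofReal ((1 - r ^ 2) ^ p) = ⊤ := by
  refine top_unique ?_
  calc ⊤ = ENNReal.ofReal (a ^ d * 2⁻¹) * ∫⁻ r in Set.Ioo a 1, ENNReal.ofReal (1 - r)⁻¹ := by
        rw [setLIntegral_Ioo_inv_one_sub_eq_top ha1, ENNReal.mul_top]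
        positivity
    _ = ∫⁻ r in Set.Ioo a 1, ENNReal.ofReal (a ^ d) * ENNReal.ofReal (2 * (1 - r))⁻¹ := by
        rw [← lintegral_const_mul' _ _ ENNReal.ofReal_ne_top]
        simp only [mul_inv, ENNReal.ofReal_mul (pow_nonneg ha0.le d),
          ENNReal.ofReal_mul (inv_nonneg.2 (zero_le_two (α := ℝ))), mul_assoc]
    _ ≤ _ := setLIntegral_mono' measurableSet_Ioo fun r hr => by
        gcongr
        · exact hr.1.le
        · exact inv_two_mul_one_sub_le_one_sub_sq_rpow hp (ha0.trans hr.1).le hr.2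

variable {E : Type*} [NormedAddCommGroup E] [NormedSpace ℝ E]

lemma Ioo_smul_image_ball_subset {a : ℝ} (ha : 0 ≤ a) (z : sphere (0 : E) 1) (ε : ℝ) :
    Set.Ioo a 1 • ((↑) '' ball z ε : Set E) ⊆ ball ↑z (1 - a + ε) ∩ ball 0 1 := by
  rintro _ ⟨t, ⟨hat, ht1⟩, _, ⟨u, hu, rfl⟩, rfl⟩
  have hdist : dist (t • (u : E)) u = 1 - t := by
    rw [dist_eq_norm, show t • (u : E) - u = (t - 1) • (u : E) by module, norm_smul,
      norm_eq_of_mem_sphere, mul_one, Real.norm_of_nonpos (by linarith), neg_sub]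
  constructor
  · rw [mem_ball, Subtype.dist_eq] at hu
    rw [mem_ball]
    linarith [dist_triangle (t • (u : E)) u z]
  · rw [mem_ball_zero_iff, norm_smul, norm_eq_of_mem_sphere, mul_one,
      Real.norm_of_nonneg (ha.trans hat.le)]
    exact ht1

variable [FiniteDimensional ℝ E] [MeasurableSpace E] [BorelSpace E] (μ : Measure E)
  [μ.IsAddHaarMeasure]

lemma setLIntegral_ball_inter_ball_one_sub_norm_sq_rpow_eq_top {p ε : ℝ} (hp : p ≤ -1)
    {z : E} (hz : ‖z‖ = 1) (hε : 0 < ε) :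
    ∫⁻ x in ball z ε ∩ ball 0 1, ENNReal.ofReal ((1 - ‖x‖ ^ 2) ^ p) ∂μ = ⊤ := by
  lift z to sphere (0 : E) 1 using mem_sphere_zero_iff_norm.2 hz
  obtain ⟨a, ha, ha1⟩ := exists_between (max_lt one_pos (sub_lt_self 1 (half_pos hε)))
  obtain ⟨ha0, haε⟩ := max_lt_iff.1 ha
  have hsector : Set.Ioo a 1 • ((↑) '' ball z (ε / 2) : Set E) ⊆ ball ↑z ε ∩ ball 0 1 :=
    (Ioo_smul_image_ball_subset ha0.le z (ε / 2)).trans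
      (Set.inter_subset_inter_left _ (ball_subset_ball (by linarith)))
  refine top_unique ?_
  calc ⊤ = μ.toSphere (ball z (ε / 2)) * ∫⁻ r in Set.Ioo a 1,
          ENNReal.ofReal (r ^ (finrank ℝ E - 1)) * ENNReal.ofReal ((1 - r ^ 2) ^ p) := by
        rw [setLIntegral_Ioo_pow_mul_one_sub_sq_rpow_eq_top _ hp ha0 ha1, ENNReal.mul_top]
        exact (measure_ball_pos _ _ (half_pos hε)).ne'
    _ = ∫⁻ x in Set.Ioo a 1 • ((↑) '' ball z (ε / 2) : Set E),
          ENNReal.ofReal ((1 - ‖x‖ ^ 2) ^ p) ∂μ :=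
        (setLIntegral_smul_sphere_comp_norm μ measurableSet_Ioo
          (fun r hr => ha0.trans hr.1) _ (by fun_prop)).symm
    _ ≤ ∫⁻ x in ball ↑z ε ∩ ball 0 1, ENNReal.ofReal ((1 - ‖x‖ ^ 2) ^ p) ∂μ :=
        lintegral_mono_set hsector

end Divergence

section HyperbolicVolume

variable {n : ℕ}

lemma hypVolume_apply (n : ℕ) (A : Set (EuclideanSpace ℝ (Fin n))) :
    hypVolume n A = ∫⁻ x in A, ENNReal.ofReal ((1 - ‖x‖ ^ 2) ^ (-((n : ℝ) + 1) / 2)) :=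
  withDensity_apply' _ A

lemma hypVolume_convexHull_lt_top (hn : 2 ≤ n) {s : Finset (EuclideanSpace ℝ (Fin n))}
    (hs : (s : Set (EuclideanSpace ℝ (Fin n))) ⊆ closedBall 0 1) :
    hypVolume n (convexHull ℝ (s : Set (EuclideanSpace ℝ (Fin n)))) < ⊤ := by
  have hn' : (2 : ℝ) ≤ n := by exact_mod_cast hn
  rw [hypVolume_apply]
  simpa only [one_pow] using setLIntegral_convexHull_sq_sub_norm_sq_rpow_lt_top volume hs
    (by rw [finrank_euclideanSpace_fin]; linarith) (by linarith)

lemma hypVolume_ball_inter_ball_eq_top {z : EuclideanSpace ℝ (Fin n)} (hz : ‖z‖ = 1) {ε : ℝ}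
    (hε : 0 < ε) : hypVolume n (ball z ε ∩ ball 0 1) = ⊤ := by
  have hn : 1 ≤ n := by
    rw [Nat.one_le_iff_ne_zero]
    rintro rfl
    simp [Subsingleton.elim z 0] at hz
  have hn' : (1 : ℝ) ≤ n := by exact_mod_cast hn
  rw [hypVolume_apply]
  exact setLIntegral_ball_inter_ball_one_sub_norm_sq_rpow_eq_top volume (by linarith) hz hε

lemma subset_closedBall_of_hypVolume_lt_top {K : Set (EuclideanSpace ℝ (Fin n))}
    (hK : Convex ℝ K) (hne : (interior K ∩ ball 0 1).Nonempty)
    (hvol : hypVolume n (K ∩ ball 0 1) < ⊤) : K ⊆ closedBall 0 1 := by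
  intro y hy
  rw [mem_closedBall_zero_iff]
  by_contra! hy1
  obtain ⟨x, hx, hx1⟩ := hne
  obtain ⟨z, hz, hz1⟩ :=
    exists_mem_interior_norm_eq hK hx (mem_ball_zero_iff.1 hx1) hy hy1
  obtain ⟨ε, hε, hball⟩ := Metric.mem_nhds_iff.1 (mem_interior_iff_mem_nhds.1 hz)
  refine hvol.ne (top_unique ?_)
  rw [← hypVolume_ball_inter_ball_eq_top hz1 hε]
  exact measure_mono (Set.inter_subset_inter_left _ hball)

end HyperbolicVolume

section KleinModel

variable {n : ℕ}

/-- The spatial part `(x₁, …, xₙ)` of a vector `(x₀, x₁, …, xₙ)` of Minkowski space. -/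
def spatialPart (x : Fin (n + 1) → ℝ) : EuclideanSpace ℝ (Fin n) :=
  WithLp.toLp 2 (Fin.tail x)

lemma mink_eq_inner_sub (x y : Fin (n + 1) → ℝ) :
    mink x y = ⟪spatialPart x, spatialPart y⟫ - x 0 * y 0 := by
  simp only [mink, spatialPart, Fin.tail, PiLp.inner_apply, RCLike.inner_apply, conj_trivial]
  simp only [mul_comm]
  ring

lemma kleinMap_eq_smul (x : Fin (n + 1) → ℝ) : kleinMap x = (x 0)⁻¹ • spatialPart x := by
  ext i
  simp [kleinMap, spatialPart, Fin.tail, div_eq_inv_mul]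

lemma mink_eq_mul_inner_kleinMap_sub (x : Fin (n + 1) → ℝ) {y : Fin (n + 1) → ℝ} (hy : y 0 ≠ 0) :
    mink x y = y 0 * (⟪spatialPart x, kleinMap y⟫ - x 0) := by
  rw [mink_eq_inner_sub, kleinMap_eq_smul, real_inner_smul_right]
  field_simp

lemma mink_self_eq_sq_mul {x : Fin (n + 1) → ℝ} (hx : x 0 ≠ 0) :
    mink x x = x 0 ^ 2 * (‖kleinMap x‖ ^ 2 - 1) := by
  rw [mink_eq_inner_sub, kleinMap_eq_smul, norm_smul, mul_pow, real_inner_self_eq_norm_sq,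
    norm_inv, Real.norm_eq_abs, inv_pow, sq_abs]
  field_simp

lemma image_kleinMap_hyperboloid : kleinMap '' Hyperboloid n = ball 0 1 := by
  ext y
  constructor
  · rintro ⟨x, ⟨hx, hx0⟩, rfl⟩
    rw [mink_self_eq_sq_mul hx0.ne'] at hx
    rw [mem_ball_zero_iff, ← sq_lt_one_iff₀ (norm_nonneg _)]
    nlinarith [sq_pos_of_pos hx0]
  · intro hy
    have hpos : 0 < 1 - ‖y‖ ^ 2 := by
      rw [sub_pos, sq_lt_one_iff₀ (norm_nonneg _)]
      exact mem_ball_zero_iff.1 hy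
    set c := (√(1 - ‖y‖ ^ 2))⁻¹
    have hc : 0 < c := by positivity
    have hc2 : c ^ 2 * (1 - ‖y‖ ^ 2) = 1 := by
      rw [inv_pow, Real.sq_sqrt hpos.le, inv_mul_cancel₀ hpos.ne']
    let x : Fin (n + 1) → ℝ := Fin.cons c (c • y.ofLp)
    have hxy : kleinMap x = y := by
      ext i
      simp [x, kleinMap, hc.ne']
    refine ⟨x, ⟨?_, hc⟩, hxy⟩
    rw [mink_self_eq_sq_mul (x := x) hc.ne', hxy]
    simp only [x, Fin.cons_zero]
    linarith

namespace HypPolyhedron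

variable (P : HypPolyhedron n)

/-- The Euclidean polyhedral set whose intersection with the open unit ball is the Klein-model
image of `P`. -/
def kleinPolyhedron : Set (EuclideanSpace ℝ (Fin n)) :=
  polyhedron (fun i => innerₗ _ (spatialPart (P.e i))) (fun i => P.e i 0)

lemma carrier_eq_hyperboloid_inter_preimage :
    P.carrier = Hyperboloid n ∩ kleinMap ⁻¹' P.kleinPolyhedron := by
  ext x
  refine and_congr_right fun hx => forall_congr' fun i => ?_
  rw [mink_eq_mul_inner_kleinMap_sub _ hx.2.ne', innerₗ_apply_apply]
  exact (smul_nonpos_iff_nonpos_of_pos_left hx.2).trans sub_nonpos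

lemma image_kleinMap_carrier : kleinMap '' P.carrier = P.kleinPolyhedron ∩ ball 0 1 := by
  rw [carrier_eq_hyperboloid_inter_preimage, Set.image_inter_preimage, image_kleinMap_hyperboloid,
    Set.inter_comm]

lemma nonempty_interior_kleinPolyhedron_inter_ball :
    (interior P.kleinPolyhedron ∩ ball 0 1).Nonempty := by
  have h : (interior (kleinMap '' P.carrier)).Nonempty := P.nonempty_int
  rwa [image_kleinMap_carrier, interior_inter, isOpen_ball.interior_eq] at h

end HypPolyhedron

end KleinModel

/-- A convex hyperbolic `n`-polyhedron has finite hyperbolic volume if and only if its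
closure in `ℝⁿ` is the convex hull of a finite set of points of the closed unit ball
(equivalently, of its vertices). -/
theorem finite_volume_iff_convex_hull_of_finitely_many_points (n : ℕ) (hn : 2 ≤ n)
    (P : HypPolyhedron n) :
    hypVolume n (kleinMap '' P.carrier) < ⊤ ↔
      ∃ s : Finset (EuclideanSpace ℝ (Fin n)),
        (s : Set (EuclideanSpace ℝ (Fin n))) ⊆ Metric.closedBall 0 1 ∧
        closure (kleinMap '' P.carrier)
          = convexHull ℝ (s : Set (EuclideanSpace ℝ (Fin n))) := by
  rw [P.image_kleinMap_carrier]
  have hconvex : Convex ℝ P.kleinPolyhedron := convex_polyhedron _ _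
  have hclosed : IsClosed P.kleinPolyhedron := isClosed_polyhedron _ _
  have hinterior := P.nonempty_interior_kleinPolyhedron_inter_ball
  constructor
  · intro hvol
    have hball := subset_closedBall_of_hypVolume_lt_top hconvex hinterior hvol
    obtain ⟨s, hs⟩ := exists_finset_convexHull_eq_polyhedron
      ((isCompact_closedBall 0 1).of_isClosed_subset hclosed hball)
    refine ⟨s, (subset_convexHull ℝ _).trans (hs.trans_subset hball), ?_⟩
    rw [closure_inter_ball_eq_self hconvex hclosed hinterior.left one_ne_zero hball]
    exact hs.symm
  · rintro ⟨s, hs, hclosure⟩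
    calc hypVolume n (P.kleinPolyhedron ∩ ball 0 1)
        ≤ hypVolume n (convexHull ℝ (s : Set (EuclideanSpace ℝ (Fin n)))) :=
          measure_mono (hclosure ▸ subset_closure)
      _ < ⊤ := hypVolume_convexHull_lt_top hn hs
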